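/- arXiv:1206.4586 — 2 statements merged into one kernel-verified Lean document; each statement's English description precedes it below -/
import Mathlib

section
/- Let 0 < p < 1, let ν = p δ₁ + (1−p) δ₀ on [0,1], μ_ν = ν × λ on S = [0,1]², and W the kernel on S defined by W((s₁,t₁),(s₂,t₂)) = s₂ if t₁ < t₂, s₁ if t₁ > t₂, 0 if t₁ = t₂. Let G(∞,W) be the random graph on {1,2,3,…} obtained by taking X₁,X₂,… i.i.d. with distribution μ_ν and (V_{ij})_{i<j} i.i.d. Uniform[0,1] independent of the X's, with edge {i,j} present if and only if V_{ij} < W(X_i,X_j). Then almost surely no two distinct vertices i ≠ j of G(∞,W) have equal closed neighbourhoods N̄(i) = N̄(j), where N̄(v) = {v} ∪ {u : u adjacent to v}. -/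
open MeasureTheory ProbabilityTheory Filter
open scoped ENNReal

/-- Lebesgue measure on `[0,1]`, as a (probability) measure on `ℝ`. -/
noncomputable def unif01 : Measure ℝ := volume.restrict (Set.Icc (0 : ℝ) 1)

/-- The kernel `W` on `S = [0,1]²`:
`W((s₁,t₁),(s₂,t₂)) = s₂` if `t₁ < t₂`, `s₁` if `t₁ > t₂`, and `0` if `t₁ = t₂`. -/
noncomputable def Wker : ℝ × ℝ → ℝ × ℝ → ℝ := fun x y =>
  if x.2 < y.2 then y.1 else if y.2 < x.2 then x.1 else 0

/-- Index type for the joint family `(X_i)_i, (V_{ij})_{ij}`. -/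
def mixType : ℕ ⊕ (ℕ × ℕ) → Type
  | .inl _ => ℝ × ℝ
  | .inr _ => ℝ

instance : ∀ s, MeasurableSpace (mixType s)
  | .inl _ => (inferInstance : MeasurableSpace (ℝ × ℝ))
  | .inr _ => (inferInstance : MeasurableSpace ℝ)

/-- The combined family of random variables `(X_i)_i, (V_{ij})_{ij}`. -/
def mixFam {Ω : Type*} (X : ℕ → Ω → ℝ × ℝ) (V : ℕ × ℕ → Ω → ℝ) :
    ∀ s : ℕ ⊕ (ℕ × ℕ), Ω → mixType s
  | .inl i => X i
  | .inr q => V q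

/-- Adjacency in `G(∞,W)`: for `a < b`, the edge `{a,b}` is present iff
`V_{ab} < W(X_a, X_b)`. -/
def kerAdj {Ω : Type*} (X : ℕ → Ω → ℝ × ℝ) (V : ℕ × ℕ → Ω → ℝ) (ω : Ω) (a b : ℕ) : Prop :=
  (a < b ∧ V (a, b) ω < Wker (X a ω) (X b ω)) ∨ (b < a ∧ V (b, a) ω < Wker (X b ω) (X a ω))


lemma aux_hit {Ω : Type*} [MeasurableSpace Ω] (P : Measure Ω) [IsProbabilityMeasure P]
    (X : ℕ → Ω → ℝ × ℝ) (hX : ∀ i, Measurable (X i)) (m : Measure (ℝ × ℝ))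
    (hlaw : ∀ i, Measure.map (X i) P = m) (hind : iIndepFun X P)
    (A : Set (ℝ × ℝ)) (hA : MeasurableSet A) (hpos : m A ≠ 0) :
    ∀ᵐ ω ∂P, ∃ u, X u ω ∈ A := by
  have hm : IsProbabilityMeasure m := by
    rw [← hlaw 0]; exact Measure.isProbabilityMeasure_map (hX 0).aemeasurable
  have hc : m Aᶜ < 1 := by
    rw [prob_compl_eq_one_sub hA]
    exact ENNReal.sub_lt_self (by simp) (by simp) hpos
  have hle : ∀ n : ℕ, P {ω | ¬ ∃ u, X u ω ∈ A} ≤ (m Aᶜ) ^ n := by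
    intro n
    have h := hind.measure_inter_preimage_eq_mul (Finset.range n) (sets := fun _ => Aᶜ)
      (fun _ _ => hA.compl)
    have h2 : ∀ i, P (X i ⁻¹' Aᶜ) = m Aᶜ := fun i => by
      rw [← hlaw i, Measure.map_apply (hX i) hA.compl]
    simp only [h2, Finset.prod_const, Finset.card_range] at h
    rw [← h]
    apply measure_mono
    intro ω hω
    simp only [Set.mem_iInter]
    intro i _ hi
    exact hω ⟨i, hi⟩
  have := ge_of_tendsto' (ENNReal.tendsto_pow_atTop_nhds_zero_of_lt_one hc) hle
  exact le_antisymm this (by simp)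

lemma aux_det {Ω : Type*} (X : ℕ → Ω → ℝ × ℝ) (V : ℕ × ℕ → Ω → ℝ) (ω : Ω)
    (hV : ∀ q, 0 ≤ V q ω ∧ V q ω < 1)
    (hs : ∀ i, (X i ω).1 = 1 ∨ (X i ω).1 = 0) (u v : ℕ) (h : (X u ω).2 < (X v ω).2) :
    (kerAdj X V ω u v ↔ (X v ω).1 = 1) ∧ (kerAdj X V ω v u ↔ (X v ω).1 = 1) := by
  have hne : u ≠ v := by rintro rfl; exact lt_irrefl _ h
  have h1 := hV (u, v)
  have h2 := hV (v, u)
  have h3 : Wker (X u ω) (X v ω) = (X v ω).1 := by simp [Wker, h]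
  have h4 : Wker (X v ω) (X u ω) = (X v ω).1 := by simp [Wker, h, h.not_gt]
  unfold kerAdj
  rw [h3, h4]
  rcases hs v with h5 | h5 <;> rw [h5] <;> rcases lt_or_gt_of_ne hne with h6 | h6 <;>
    simp [h6, h6.not_gt, h1, h2]

lemma aux_sep {Ω : Type*} (X : ℕ → Ω → ℝ × ℝ) (V : ℕ × ℕ → Ω → ℝ) (ω : Ω)
    (hV : ∀ q, 0 ≤ V q ω ∧ V q ω < 1)
    (hs : ∀ i, (X i ω).1 = 1 ∨ (X i ω).1 = 0)
    (ht : ∀ i, (X i ω).2 ∈ Set.Icc (0 : ℝ) 1)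
    (hhit : ∀ q r : ℚ, 0 < q → q < r → r < 1 → ∀ c : Bool,
      ∃ u, X u ω ∈ ({if c then (1 : ℝ) else 0} : Set ℝ) ×ˢ Set.Ioo (q : ℝ) r)
    (a b : ℕ) (hab : (X a ω).2 < (X b ω).2) :
    ∃ u, u ≠ a ∧ u ≠ b ∧ ¬ (kerAdj X V ω u a ↔ kerAdj X V ω u b) := by
  obtain ⟨q, hq1, hq2⟩ := exists_rat_btwn hab
  obtain ⟨r, hr1, hr2⟩ := exists_rat_btwn hq2
  have ha := ht a
  have hb := ht b
  have hq0 : 0 < q := by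
    have : (0 : ℝ) < q := lt_of_le_of_lt ha.1 hq1
    exact_mod_cast this
  have hr0 : r < 1 := by
    have : (r : ℝ) < 1 := lt_of_lt_of_le hr2 hb.2
    exact_mod_cast this
  have hqr : q < r := by exact_mod_cast hr1
  have key : ∀ c : Bool, ∃ u, u ≠ a ∧ u ≠ b ∧ (X u ω).1 = (if c then (1 : ℝ) else 0) ∧
      (kerAdj X V ω u a ↔ (X u ω).1 = 1) ∧ (kerAdj X V ω u b ↔ (X b ω).1 = 1) := by
    intro c
    obtain ⟨u, hu1, hu2, hu3⟩ := hhit q r hq0 hqr hr0 c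
    have h1 : (X a ω).2 < (X u ω).2 := hq1.trans hu2
    have h2 : (X u ω).2 < (X b ω).2 := hu3.trans hr2
    refine ⟨u, ?_, ?_, hu1, (aux_det X V ω hV hs a u h1).2, (aux_det X V ω hV hs u b h2).1⟩
    · rintro rfl; exact lt_irrefl _ h1
    · rintro rfl; exact lt_irrefl _ h2
  rcases hs b with h | h
  · obtain ⟨u, h1, h2, h3, h4, h5⟩ := key false
    refine ⟨u, h1, h2, ?_⟩
    rw [h4, h5, h3, h]; simp
  · obtain ⟨u, h1, h2, h3, h4, h5⟩ := key true
    refine ⟨u, h1, h2, ?_⟩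
    rw [h4, h5, h3, h]; simp

/-- Let `0 < p < 1`, `ν = p δ₁ + (1−p) δ₀`, `μ_ν = ν × λ` on `[0,1]²`,
and let `G(∞,W)` be built from `X₁,X₂,…` i.i.d. `μ_ν` and `(V_{ij})_{i<j}` i.i.d.
`Uniform[0,1]`, all independent, with edge `{i,j}` iff `V_{ij} < W(X_i,X_j)`. Then almost
surely no two distinct vertices of `G(∞,W)` have equal closed neighbourhoods. -/
theorem stmt16 {Ω : Type*} [MeasurableSpace Ω] (P : Measure Ω) [IsProbabilityMeasure P]
    (p : ℝ) (hp0 : 0 < p) (hp1 : p < 1)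
    (X : ℕ → Ω → ℝ × ℝ) (V : ℕ × ℕ → Ω → ℝ)
    (hXmeas : ∀ i, Measurable (X i)) (hVmeas : ∀ q, Measurable (V q))
    (hXlaw : ∀ i, Measure.map (X i) P
      = (ENNReal.ofReal p • Measure.dirac (1 : ℝ)
          + ENNReal.ofReal (1 - p) • Measure.dirac 0).prod unif01)
    (hVlaw : ∀ q, Measure.map (V q) P = unif01)
    (hindep : iIndepFun (m := fun s => (inferInstance : MeasurableSpace (mixType s)))
      (mixFam X V) P) :
    ∀ᵐ ω ∂P, ∀ a b : ℕ, a ≠ b →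
      ¬ (∀ u : ℕ, (u = a ∨ kerAdj X V ω u a) ↔ (u = b ∨ kerAdj X V ω u b)) := by
  have hXind : iIndepFun X P := hindep.precomp (g := Sum.inl) Sum.inl_injective
  have hU : IsProbabilityMeasure unif01 := by
    rw [← hVlaw (0, 0)]; exact Measure.isProbabilityMeasure_map (hVmeas _).aemeasurable
  have hna : NullSingletonClass unif01 := by unfold unif01; infer_instance
  set ν : Measure ℝ := ENNReal.ofReal p • Measure.dirac (1 : ℝ)
          + ENNReal.ofReal (1 - p) • Measure.dirac 0 with hν
  have hνp : IsProbabilityMeasure ν := ⟨by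
    simp only [hν, Measure.add_apply, Measure.smul_apply, measure_univ, smul_eq_mul, mul_one]
    rw [← ENNReal.ofReal_add hp0.le (by linarith)]; simp⟩
  have hν1 : ∀ c : Bool, ν {if c then (1 : ℝ) else 0} ≠ 0 := by
    intro c
    cases c <;> simp [hν, hp0, hp1]
  have hνs : ∀ᵐ x ∂ν, x = 1 ∨ x = 0 := by
    rw [hν, ae_add_measure_iff]
    constructor <;> apply Measure.ae_smul_measure <;> rw [ae_dirac_iff (by measurability)] <;> simp
  have hUV : ∀ᵐ x ∂unif01, 0 ≤ x ∧ x < 1 := by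
    have h1 : ∀ᵐ x ∂unif01, x ∈ Set.Icc (0 : ℝ) 1 := ae_restrict_mem measurableSet_Icc
    have h2 : ∀ᵐ x ∂unif01, x ≠ 1 := by simp [ae_iff]
    filter_upwards [h1, h2] with x hx hx'
    exact ⟨hx.1, lt_of_le_of_ne hx.2 hx'⟩
  have hm1 : ∀ i, Measure.map (fun ω => (X i ω).1) P = ν := fun i => by
    have := congrArg (Measure.map Prod.fst) (hXlaw i)
    rw [Measure.map_map measurable_fst (hXmeas i), Measure.map_fst_prod] at this
    simpa [Function.comp_def] using this
  have hm2 : ∀ i, Measure.map (fun ω => (X i ω).2) P = unif01 := fun i => by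
    have := congrArg (Measure.map Prod.snd) (hXlaw i)
    rw [Measure.map_map measurable_snd (hXmeas i), Measure.map_snd_prod] at this
    simpa [Function.comp_def] using this
  have e1 : ∀ᵐ ω ∂P, ∀ q, 0 ≤ V q ω ∧ V q ω < 1 := by
    rw [ae_all_iff]; intro q
    rw [← hVlaw q] at hUV
    exact ae_of_ae_map (hVmeas q).aemeasurable hUV
  have e2 : ∀ᵐ ω ∂P, ∀ i, (X i ω).1 = 1 ∨ (X i ω).1 = 0 := by
    rw [ae_all_iff]; intro i
    rw [← hm1 i] at hνs
    exact ae_of_ae_map (hXmeas i).fst.aemeasurable hνs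
  have e3 : ∀ᵐ ω ∂P, ∀ i, (X i ω).2 ∈ Set.Icc (0 : ℝ) 1 := by
    rw [ae_all_iff]; intro i
    rw [← hm2 i] at hUV
    filter_upwards [ae_of_ae_map (hXmeas i).snd.aemeasurable hUV] with ω h
    exact ⟨h.1, h.2.le⟩
  have e4 : ∀ᵐ ω ∂P, ∀ q r : ℚ, 0 < q → q < r → r < 1 → ∀ c : Bool,
      ∃ u, X u ω ∈ ({if c then (1 : ℝ) else 0} : Set ℝ) ×ˢ Set.Ioo (q : ℝ) r := by
    simp only [ae_all_iff]
    intro q r hq hqr hr c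
    refine aux_hit P X hXmeas _ hXlaw hXind _
      ((measurableSet_singleton _).prod measurableSet_Ioo) ?_
    rw [Measure.prod_prod]
    refine mul_ne_zero (hν1 c) ?_
    have hq' : (0 : ℝ) < q := by exact_mod_cast hq
    have hr' : (r : ℝ) < 1 := by exact_mod_cast hr
    have hqr' : (q : ℝ) < r := by exact_mod_cast hqr
    unfold unif01
    rw [Measure.restrict_apply measurableSet_Ioo, Set.inter_eq_left.2, Real.volume_Ioo]
    · simpa using hqr
    · intro x hx; exact ⟨(hq'.trans hx.1).le, (hx.2.trans hr').le⟩
  have e5 : ∀ᵐ ω ∂P, ∀ i j, i ≠ j → (X i ω).2 ≠ (X j ω).2 := by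
    simp only [ae_all_iff]
    intro i j hij
    have hI : IndepFun (fun ω => (X i ω).2) (fun ω => (X j ω).2) P :=
      (hXind.indepFun hij).comp measurable_snd measurable_snd
    have hmp := hI.map_prod_eq_prod_map_map (hXmeas i).snd.aemeasurable (hXmeas j).snd.aemeasurable
    rw [hm2, hm2] at hmp
    have hd : ∀ᵐ z ∂(unif01.prod unif01), z.1 ≠ z.2 := by
      have hms : MeasurableSet {z : ℝ × ℝ | z.1 ≠ z.2} :=
        (measurableSet_eq_fun measurable_fst measurable_snd).compl
      rw [Measure.ae_prod_iff_ae_ae hms]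
      refine Eventually.of_forall fun x => ?_
      simp [ae_iff]
    rw [← hmp] at hd
    exact ae_of_ae_map ((hXmeas i).snd.prodMk (hXmeas j).snd).aemeasurable hd
  filter_upwards [e1, e2, e3, e4, e5] with ω h1 h2 h3 h4 h5 a b hab hN
  rcases lt_or_gt_of_ne (h5 a b hab) with h | h
  · obtain ⟨u, hu1, hu2, hu3⟩ := aux_sep X V ω h1 h2 h3 h4 a b h
    have := hN u
    simp only [hu1, hu2, false_or] at this
    exact hu3 this
  · obtain ⟨u, hu1, hu2, hu3⟩ := aux_sep X V ω h1 h2 h3 h4 b a h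
    have := hN u
    simp only [hu1, hu2, false_or] at this
    exact hu3 this.symm
end

section
/- Let 0 < p < 1, ν = p δ₁ + (1−p) δ₀ on [0,1], μ_ν = ν × λ on S = [0,1]², and W the kernel on S defined by W((s₁,t₁),(s₂,t₂)) = s₂ if t₁ < t₂, s₁ if t₁ > t₂, 0 if t₁ = t₂. Define φ : [0,1] → S by φ(x) = (0, 1 − x/(1−p)) for 0 ≤ x ≤ 1−p and φ(x) = (1, (x−1+p)/p) for 1−p < x ≤ 1. Then: (i) φ is measure preserving from ([0,1], λ) to (S, μ_ν), i.e. the pushforward of λ under φ is μ_ν; (ii) for λ×λ-almost every (x,y) ∈ [0,1]², W(φ(x),φ(y)) = 1 if p·min(x,y) + (1−p)·max(x,y) > 1−p and W(φ(x),φ(y)) = 0 if p·min(x,y) + (1−p)·max(x,y) < 1−p; that is, W(φ(x),φ(y)) equals a.e. the indicator function of the quadrilateral with vertices (0,1), (1−p,1−p), (1,0) and (1,1). -/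
open MeasureTheory Filter
open scoped ENNReal

/-- The map `φ : [0,1] → S`, `φ(x) = (0, 1 − x/(1−p))` for `x ≤ 1−p` and
`φ(x) = (1, (x−1+p)/p)` for `x > 1−p`. -/
noncomputable def phiMap (p : ℝ) : ℝ → ℝ × ℝ := fun x =>
  if x ≤ 1 - p then (0, 1 - x / (1 - p)) else (1, (x - 1 + p) / p)

lemma aff_map (a b : ℝ) (ha : a ≠ 0) (s : Set ℝ) 
    (hs : (fun x => a * x + b) ⁻¹' (Set.Icc 0 1) = s) :
    Measure.map (fun x => a * x + b) (volume.restrict s)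
      = ENNReal.ofReal |a⁻¹| • unif01 := by
  have hm : Measurable (fun x : ℝ => a * x + b) := by fun_prop
  subst hs
  rw [← Measure.restrict_map hm measurableSet_Icc]
  have : Measure.map (fun x => a * x + b) volume = ENNReal.ofReal |a⁻¹| • (volume : Measure ℝ) := by
    have h1 : (fun x : ℝ => a * x + b) = (fun x => x + b) ∘ (fun x => a * x) := rfl
    rw [h1, ← Measure.map_map (by fun_prop) (by fun_prop), Real.map_volume_mul_left ha,
      Measure.map_smul, (measurePreserving_add_right volume b).map_eq]
  rw [this, Measure.restrict_smul, unif01]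

lemma meas_phi (p : ℝ) : Measurable (phiMap p) := by
  unfold phiMap
  exact Measurable.ite measurableSet_Iic (by fun_prop) (by fun_prop)

lemma part_one (p : ℝ) (hp0 : 0 < p) (hp1 : p < 1) :
    Measure.map (phiMap p) unif01
      = (ENNReal.ofReal p • Measure.dirac (1 : ℝ)
          + ENNReal.ofReal (1 - p) • Measure.dirac 0).prod unif01 := by
  have hq : 0 < 1 - p := by linarith
  have : IsFiniteMeasure unif01 := by unfold unif01; infer_instance
  have hsplit : unif01 = volume.restrict (Set.Ioc (1 - p) 1) + volume.restrict (Set.Icc 0 (1 - p)) := by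
    rw [unif01, ← Set.Icc_union_Ioc_eq_Icc hq.le (by linarith : 1 - p ≤ 1), add_comm,
      Measure.restrict_union _ measurableSet_Ioc]
    rw [Set.disjoint_left]
    intro x hx hx'
    exact absurd hx.2 (not_le.2 hx'.1)
  have h0 := aff_map (-(1 - p)⁻¹) 1 (by simp; exact hq.ne') (Set.Icc 0 (1 - p)) (by
    ext x
    have : -(1 - p)⁻¹ * x + 1 = (1 - p - x) / (1 - p) := by field_simp; ring
    simp only [Set.mem_preimage, Set.mem_Icc, this, le_div_iff₀ hq, div_le_iff₀ hq]
    constructor <;> rintro ⟨h, h'⟩ <;> constructor <;> linarith)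
  have h1 := aff_map p⁻¹ ((p - 1) / p) (by simp; exact hp0.ne') (Set.Icc (1 - p) 1) (by
    ext x
    have : p⁻¹ * x + (p - 1) / p = (x + p - 1) / p := by field_simp; ring
    simp only [Set.mem_preimage, Set.mem_Icc, this, le_div_iff₀ hp0, div_le_iff₀ hp0]
    constructor <;> rintro ⟨h, h'⟩ <;> constructor <;> linarith)
  rw [← restrict_Ioc_eq_restrict_Icc, inv_inv, abs_of_pos hp0] at h1
  rw [inv_neg, inv_inv, abs_neg, abs_of_pos hq] at h0
  rw [Measure.add_prod, Measure.prod_smul_left, Measure.prod_smul_left, Measure.dirac_prod,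
    Measure.dirac_prod, ← Measure.map_smul, ← Measure.map_smul, ← h0, ← h1,
    Measure.map_map (by fun_prop) (by fun_prop), Measure.map_map (by fun_prop) (by fun_prop)]
  rw [hsplit, Measure.map_add _ _ (meas_phi p)]
  congr 1
  · apply Measure.map_congr
    filter_upwards [ae_restrict_mem measurableSet_Ioc] with x hx
    simp only [phiMap, not_le.2 hx.1, if_false, Function.comp]
    congr 1
    field_simp; ring
  · apply Measure.map_congr
    filter_upwards [ae_restrict_mem measurableSet_Icc] with x hx
    simp only [phiMap, hx.2, if_true, Function.comp]
    congr 1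
    field_simp; ring

lemma ae_ne : ∀ᵐ q : ℝ × ℝ ∂(unif01.prod unif01), q.1 ≠ q.2 := by
  have : IsFiniteMeasure unif01 := by unfold unif01; infer_instance
  have : NullSingletonClass unif01 := by unfold unif01; infer_instance
  have hm : MeasurableSet {q : ℝ × ℝ | q.1 ≠ q.2} :=
    (measurableSet_eq_fun measurable_fst measurable_snd).compl
  rw [Measure.ae_prod_iff_ae_ae hm]
  refine Eventually.of_forall fun x => ?_
  have : ∀ᵐ y ∂unif01, y ≠ x := by simp [ae_iff]
  filter_upwards [this] with y hy using hy.symm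

lemma W_symm (x y : ℝ × ℝ) : Wker x y = Wker y x := by
  unfold Wker
  split_ifs <;> first | rfl | (exfalso; linarith)

lemma W_lt (p : ℝ) (hp0 : 0 < p) (hp1 : p < 1) (x y : ℝ) (h : x < y) :
      (1 - p < p * x + (1 - p) * y → Wker (phiMap p x) (phiMap p y) = 1) ∧
      (p * x + (1 - p) * y < 1 - p → Wker (phiMap p x) (phiMap p y) = 0) := by
  have hq : 0 < 1 - p := by linarith
  by_cases hy : y ≤ 1 - p
  · have hx : x ≤ 1 - p := by linarith
    have hW : Wker (phiMap p x) (phiMap p y) = 0 := by simp [Wker, phiMap, hx, hy]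
    refine ⟨fun h' => ?_, fun _ => hW⟩
    nlinarith
  by_cases hx : x ≤ 1 - p
  · have key : (1 - x / (1 - p) < (y - 1 + p) / p) ↔ 1 - p < p * x + (1 - p) * y := by
      have : 1 - x / (1 - p) = (1 - p - x) / (1 - p) := by field_simp
      rw [this, div_lt_div_iff₀ hq hp0]
      constructor <;> intro h <;> nlinarith
    simp only [Wker, phiMap, hx, hy, if_true, if_false, key]
    refine ⟨fun h' => by simp [h'], fun h' => by simp [h'.le]⟩
  · have key : (x - 1 + p) / p < (y - 1 + p) / p := by
      apply div_lt_div_of_pos_right _ hp0; linarith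
    simp only [Wker, phiMap, hx, hy, if_false, key, if_true]
    refine ⟨fun _ => trivial, fun h' => ?_⟩
    push Not at hx hy
    nlinarith

/-- Let `0 < p < 1`, `ν = p δ₁ + (1−p) δ₀` and `μ_ν = ν × λ` on
`S = [0,1]²`. Then: (i) `φ` is measure preserving from `([0,1], λ)` to `(S, μ_ν)`;
(ii) for `λ×λ`-a.e. `(x,y)`, `W(φ(x),φ(y)) = 1` if `p·min(x,y) + (1−p)·max(x,y) > 1−p`
and `W(φ(x),φ(y)) = 0` if `p·min(x,y) + (1−p)·max(x,y) < 1−p`; i.e. `W(φ(x),φ(y))` is a.e.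
the indicator of the quadrilateral with vertices `(0,1)`, `(1−p,1−p)`, `(1,0)`, `(1,1)`. -/
theorem stmt17 (p : ℝ) (hp0 : 0 < p) (hp1 : p < 1) :
    Measure.map (phiMap p) unif01
      = (ENNReal.ofReal p • Measure.dirac (1 : ℝ)
          + ENNReal.ofReal (1 - p) • Measure.dirac 0).prod unif01 ∧
    ∀ᵐ q : ℝ × ℝ ∂(unif01.prod unif01),
      (1 - p < p * min q.1 q.2 + (1 - p) * max q.1 q.2 →
        Wker (phiMap p q.1) (phiMap p q.2) = 1) ∧
      (p * min q.1 q.2 + (1 - p) * max q.1 q.2 < 1 - p →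
        Wker (phiMap p q.1) (phiMap p q.2) = 0) := by
  refine ⟨part_one p hp0 hp1, ?_⟩
  filter_upwards [ae_ne] with q hq
  rcases lt_or_gt_of_ne hq with h | h
  · rw [min_eq_left h.le, max_eq_right h.le]
    exact W_lt p hp0 hp1 _ _ h
  · rw [min_eq_right h.le, max_eq_left h.le, W_symm]
    exact W_lt p hp0 hp1 _ _ h
end
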